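/- Let (M, O, O*) be a finitary binary oriented matroid with ground set E, let e₀ ∈ E, and let f : E → ℕ be a function with f(e₀) ≥ 1 such that Σ_{e ∈ dom(C)} f(e)·C(e) = 0 for every C ∈ O. Then there exists a set G ⊆ {e ∈ E : f(e) ≠ 0} with e₀ ∈ G such that Σ_{e ∈ G ∩ dom(C)} C(e) = 0 for every C ∈ O. -/

import Mathlib

open Set Function

variable {α : Type*}

/-- A circuit of a matroid `M`: a minimal dependent set. A cocircuit of `M` is a
circuit of the dual matroid `M✶`. -/
def Matroid.IsCircuitSet (M : Matroid α) (C : Set α) : Prop := Minimal M.Dep C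

/-- A signed set, encoded as an integer-valued function taking values `1` or `-1` on its
support (which plays the role of the domain of the signed set) and `0` elsewhere. -/
def IsSignedSet (g : α → ℤ) : Prop := ∀ e ∈ Function.support g, g e = 1 ∨ g e = -1

/-- A signed set is positive if it is constantly `+1` on its domain. -/
def IsPositive (g : α → ℤ) : Prop := ∀ e ∈ Function.support g, g e = 1

/-- `O` is a signature of the set-system `𝒞`: it consists of exactly two signings of each
member of `𝒞`, these two being negatives of each other, and nothing else. -/
structure IsSignature (𝒞 : Set (Set α)) (O : Set (α → ℤ)) : Prop where
  signed : ∀ g ∈ O, IsSignedSet g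
  dom_mem : ∀ g ∈ O, Function.support g ∈ 𝒞
  exists_signing : ∀ C ∈ 𝒞, ∃ g ∈ O, Function.support g = C
  neg_mem : ∀ g ∈ O, -g ∈ O
  eq_or_eq_neg : ∀ g ∈ O, ∀ h ∈ O, Function.support g = Function.support h → h = g ∨ h = -g

/-- `(M, O, Ostar)` is an oriented matroid: `O` is a signature of the circuits of `M`,
`Ostar` is a signature of the cocircuits of `M`, and orthogonality holds: whenever the
domains of `C ∈ O` and `D ∈ Ostar` intersect, the restriction of `C` to the (finite)
intersection is neither equal to, nor the negative of, the restriction of `D`. -/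
structure IsOrientation (M : Matroid α) (O Ostar : Set (α → ℤ)) : Prop where
  circuit_signature : IsSignature {C | M.IsCircuitSet C} O
  cocircuit_signature : IsSignature {D | M✶.IsCircuitSet D} Ostar
  orthogonality : ∀ C ∈ O, ∀ D ∈ Ostar,
    (Function.support C ∩ Function.support D).Nonempty →
      (¬ ∀ e ∈ Function.support C ∩ Function.support D, C e = D e) ∧
      (¬ ∀ e ∈ Function.support C ∩ Function.support D, C e = - D e)

/-- The oriented matroid is binary: `∑_{e ∈ dom C ∩ dom D} C(e)·D(e) = 0` for every
signed circuit `C ∈ O` and signed cocircuit `D ∈ Ostar` (a finite sum, since circuits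
of a finitary matroid are finite). -/
def IsBinaryOrientation (O Ostar : Set (α → ℤ)) : Prop :=
  ∀ C ∈ O, ∀ D ∈ Ostar, ∑ᶠ e, C e * D e = 0

/-- The oriented matroid is balanced: in every signed cocircuit, the set of positive
elements and the set of negative elements have the same cardinality. -/
def IsBalanced (Ostar : Set (α → ℤ)) : Prop :=
  ∀ D ∈ Ostar, Cardinal.mk {e : α | D e = 1} = Cardinal.mk {e : α | D e = -1}

/-!
On a finite set `F` of elements, a nonnegative tension `f` with `f e₀ ≠ 0` is reduced as follows.
No circuit inside `F` meets the support of `f` in `e₀` alone, so `e₀` is not spanned by the zeros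
of `f` in `F`, and some signed cocircuit `D` with `D e₀ = 1` vanishes at all these zeros. By
binarity `D` is itself a tension. If `D` is nonnegative on `F`, its support in `F` is the required
set; otherwise adding the largest multiple of `D` that keeps `f` nonnegative on `F` gives a tension
with smaller support, still positive at `e₀`. Since circuits are finite, Rado's selection principle
glues the sets obtained for the various `F`.
-/

variable {A : Type*} {M : Matroid α} {O Ostar : Set (α → ℤ)} {e₀ : α}

/-- `f` is a tension on `F`, with values in an abelian group, with respect to the signed circuits
`O`: its signed sum along every member of `O` supported in `F` vanishes. This generalizes the
tensions (potential differences) of a graph; `F` records the finite part of the ground set under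
consideration. -/
def IsTensionOn [AddCommGroup A] (O : Set (α → ℤ)) (F : Set α) (f : α → A) : Prop :=
  ∀ C ∈ O, support C ⊆ F → ∑ᶠ e, C e • f e = 0

namespace IsTensionOn

variable [AddCommGroup A] {F : Set α}

lemma add {f g : α → A} (hF : F.Finite) (hf : IsTensionOn O F f) (hg : IsTensionOn O F g) :
    IsTensionOn O F (f + g) := by
  intro C hC hCF
  have hfin (h : α → A) : HasFiniteSupport fun e ↦ C e • h e :=
    (hF.subset hCF).subset (support_smul_subset_left C h)
  simp only [Pi.add_apply, smul_add]
  rw [finsum_add_distrib (hfin f) (hfin g), hf C hC hCF, hg C hC hCF, add_zero]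

lemma zsmul_const {D : α → ℤ} (hF : F.Finite) (hD : IsTensionOn O F D) (a : A) :
    IsTensionOn O F fun e ↦ D e • a := by
  intro C hC hCF
  have hfin : HasFiniteSupport fun e ↦ C e • D e :=
    (hF.subset hCF).subset (support_smul_subset_left C D)
  simp only [← smul_assoc]
  rw [← finsum_smul' hfin, hD C hC hCF, zero_smul]

lemma finsum_mem_inter_support_eq_zero {D : α → ℤ} (hD : IsTensionOn O F D)
    (hD01 : ∀ e ∈ F, D e = 0 ∨ D e = 1) {C : α → ℤ} (hC : C ∈ O) (hCF : support C ⊆ F) :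
    ∑ᶠ e ∈ F ∩ support D, C e = 0 := by
  rw [← hD C hC hCF, finsum_mem_def]
  refine finsum_congr fun e ↦ ?_
  by_cases heF : e ∈ F
  · rcases hD01 e heF with h | h <;> simp [indicator, heF, h]
  · have hCe : C e = 0 := notMem_support.1 (notMem_subset hCF heF)
    simp [indicator, hCe]

lemma notMem_closure {f : α → A} (hO : IsSignature {C | M.IsCircuitSet C} O)
    (hf : IsTensionOn O F f) (he₀F : e₀ ∈ F) (hfe₀ : f e₀ ≠ 0) :
    e₀ ∉ M.closure (F \ support f) := by
  intro hcl
  obtain ⟨_, hCsub, hCcircuit, he₀C⟩ :=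
    Matroid.exists_isCircuit_of_mem_closure hcl fun h ↦ h.2 hfe₀
  obtain ⟨C, hC, rfl⟩ := hO.exists_signing _ hCcircuit
  have hCF : support C ⊆ F := hCsub.trans (insert_subset he₀F sdiff_subset)
  have hsum : ∑ᶠ e, C e • f e = C e₀ • f e₀ := by
    refine finsum_eq_single _ e₀ fun e hne ↦ ?_
    by_cases heC : C e = 0
    · rw [heC, zero_smul]
    · rw [notMem_support.1 ((hCsub heC).resolve_left hne).2, smul_zero]
  have hzero : C e₀ • f e₀ = 0 := hsum ▸ hf C hC hCF
  rcases hO.signed C hC e₀ he₀C with h | h <;> simp [h, hfe₀] at hzero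

end IsTensionOn

lemma IsBinaryOrientation.isTensionOn (hbin : IsBinaryOrientation O Ostar) {D : α → ℤ}
    (hD : D ∈ Ostar) (F : Set α) : IsTensionOn O F D :=
  fun C hC _ ↦ hbin C hC D hD

lemma IsSignature.exists_apply_eq_one {𝒞 : Set (Set α)} (hO : IsSignature 𝒞 O) {C : Set α}
    (hC : C ∈ 𝒞) {e : α} (he : e ∈ C) : ∃ g ∈ O, support g = C ∧ g e = 1 := by
  obtain ⟨g, hg, rfl⟩ := hO.exists_signing C hC
  rcases hO.signed g hg e he with h | h
  · exact ⟨g, hg, rfl, h⟩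
  · exact ⟨-g, hO.neg_mem g hg, support_neg g, by simp [h]⟩

lemma exists_isCocircuit_disjoint_of_notMem_closure {Z : Set α} (he₀ : e₀ ∈ M.E)
    (hZ : e₀ ∉ M.closure Z) : ∃ K, M.IsCocircuit K ∧ e₀ ∈ K ∧ Disjoint K Z := by
  obtain ⟨K, hK, he₀K⟩ := (Matroid.contract_isNonloop_iff.2 ⟨he₀, hZ⟩).exists_mem_isCocircuit
  rw [Matroid.contract_isCocircuit_iff] at hK
  exact ⟨K, hK.1, he₀K, hK.2⟩

lemma IsTensionOn.exists_cocircuit_inter_subset_support [AddCommGroup A] {F : Set α} {f : α → A}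
    (hf : IsTensionOn O F f) (hO : IsSignature {C | M.IsCircuitSet C} O)
    (hOstar : IsSignature {D | M✶.IsCircuitSet D} Ostar) (he₀ : e₀ ∈ M.E) (he₀F : e₀ ∈ F)
    (hfe₀ : f e₀ ≠ 0) :
    ∃ D ∈ Ostar, D e₀ = 1 ∧ F ∩ support D ⊆ support f := by
  obtain ⟨K, hK, he₀K, hKdisj⟩ :=
    exists_isCocircuit_disjoint_of_notMem_closure he₀ (hf.notMem_closure hO he₀F hfe₀)
  obtain ⟨D, hD, rfl, hDe₀⟩ := hOstar.exists_apply_eq_one hK he₀K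
  refine ⟨D, hD, hDe₀, fun e he ↦ ?_⟩
  by_contra hfe
  exact disjoint_left.1 hKdisj he.2 ⟨he.1, hfe⟩

section LinearOrder

variable [AddCommGroup A] [LinearOrder A] [IsOrderedAddMonoid A] {F : Finset α} {f : α → A}

-- As in the ratio test of linear programming, take the least value of `f` where `D` is negative.
lemma IsSignedSet.exists_add_zsmul_support_ssubset {D : α → ℤ} (hD : IsSignedSet D)
    (hf : ∀ e ∈ F, 0 ≤ f e) (hDf : ↑F ∩ support D ⊆ support f) (hneg : ∃ e ∈ F, D e = -1) :
    ∃ a, 0 < a ∧ (∀ e ∈ F, 0 ≤ f e + D e • a) ∧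
      {e ∈ F | f e + D e • a ≠ 0} ⊂ {e ∈ F | f e ≠ 0} := by
  obtain ⟨m, hm, hmin⟩ := Finset.exists_min_image {e ∈ F | D e = -1} f
    (by simpa [Finset.Nonempty] using hneg)
  obtain ⟨hmF, hDm⟩ := Finset.mem_filter.1 hm
  have hfm : f m ≠ 0 := hDf ⟨hmF, by simp [hDm]⟩
  refine ⟨f m, (hf m hmF).lt_of_ne' hfm, fun e he ↦ ?_, ?_⟩
  · by_cases hDe : D e = 0
    · simpa [hDe] using hf e he
    rcases hD e hDe with h | h
    · simpa [h] using add_nonneg (hf e he) (hf m hmF)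
    · simpa [h] using hmin e (Finset.mem_filter.2 ⟨he, h⟩)
  · refine (Finset.ssubset_iff_of_subset ?_).2 ⟨m, by simp [hmF, hfm], by simp [hDm]⟩
    refine Finset.monotone_filter_right F fun e he hne hfe ↦ hne ?_
    have hDe : D e = 0 := by_contra fun hDe ↦ hDf ⟨he, hDe⟩ hfe
    simp [hfe, hDe]

lemma IsTensionOn.exists_finsum_mem_eq_zero (hO : IsSignature {C | M.IsCircuitSet C} O)
    (hOstar : IsSignature {D | M✶.IsCircuitSet D} Ostar) (hbin : IsBinaryOrientation O Ostar)
    (he₀ : e₀ ∈ M.E) (he₀F : e₀ ∈ F) (hf : IsTensionOn O F f) (hf_nonneg : ∀ e ∈ F, 0 ≤ f e)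
    (hfe₀ : 0 < f e₀) :
    ∃ G ⊆ M.E ∩ F.filter (f · ≠ 0), e₀ ∈ G ∧
      ∀ C ∈ O, support C ⊆ F → ∑ᶠ e ∈ G, C e = 0 := by
  induction hS : F.filter (f · ≠ 0) using Finset.strongInduction generalizing f with
  | H S ih =>
  obtain ⟨D, hD, hDe₀, hDf⟩ :=
    hf.exists_cocircuit_inter_subset_support hO hOstar he₀ he₀F hfe₀.ne'
  have hDtension : IsTensionOn O F D := hbin.isTensionOn hD F
  by_cases hneg : ∃ e ∈ F, D e = -1
  · obtain ⟨a, ha, hnonneg, hssub⟩ :=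
      (hOstar.signed D hD).exists_add_zsmul_support_ssubset hf_nonneg hDf hneg
    have hsum := hf.add F.finite_toSet (hDtension.zsmul_const F.finite_toSet a)
    have hpos : 0 < f e₀ + D e₀ • a := by simpa [hDe₀] using add_pos hfe₀ ha
    obtain ⟨G, hG, he₀G, hGsum⟩ := ih _ (hS ▸ hssub) hsum hnonneg hpos rfl
    exact ⟨G, hG.trans (inter_subset_inter_right M.E (hS ▸ hssub.subset)), he₀G, hGsum⟩
  · have hD01 : ∀ e ∈ (F : Set α), D e = 0 ∨ D e = 1 := fun e he ↦
      or_iff_not_imp_left.2 fun hDe ↦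
        (hOstar.signed D hD e hDe).resolve_right fun h ↦ hneg ⟨e, he, h⟩
    have hDE : support D ⊆ M.E := Matroid.IsCocircuit.subset_ground (hOstar.dom_mem D hD)
    refine ⟨F ∩ support D, fun e he ↦ ⟨hDE he.2, ?_⟩, ⟨he₀F, by simp [hDe₀]⟩,
      fun C hC hCF ↦ hDtension.finsum_mem_inter_support_eq_zero hD01 hC hCF⟩
    exact hS ▸ Finset.mem_filter.2 ⟨he.1, hDf he⟩

end LinearOrder

lemma exists_finsum_mem_eq_zero_of_forall_finset {N : Type*} [AddCommMonoid N] {P : Set (α → N)}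
    (hP : ∀ C ∈ P, (support C).Finite) {T S : Set α}
    (h : ∀ F : Finset α, ∃ G ⊆ S, T ⊆ G ∧ ∀ C ∈ P, support C ⊆ F → ∑ᶠ e ∈ G, C e = 0) :
    ∃ G ⊆ S, T ⊆ G ∧ ∀ C ∈ P, ∑ᶠ e ∈ G, C e = 0 := by
  choose G hGS hTG hG using h
  obtain ⟨χ, hχ⟩ := Finset.rado_selection fun F e ↦ e ∈ G F
  refine ⟨{e | χ e}, fun e he ↦ ?_, fun e he ↦ ?_, fun C hC ↦ ?_⟩
  · obtain ⟨F, -, hF⟩ := hχ {e}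
    exact hGS F ((hF e (Finset.mem_singleton_self e)).mp he)
  · obtain ⟨F, -, hF⟩ := hχ {e}
    exact (hF e (Finset.mem_singleton_self e)).mpr (hTG F he)
  · obtain ⟨F, hCF, hF⟩ := hχ (hP C hC).toFinset
    rw [← hG F C hC ((hP C hC).toFinset_subset.1 hCF)]
    exact finsum_mem_inter_support_eq' C _ _ fun e he ↦
      (hF e ((hP C hC).mem_toFinset.2 he)).to_iff

theorem exists_zero_sum_subset_of_support_general [AddCommGroup A] [LinearOrder A]
    [IsOrderedAddMonoid A] [M.Finitary] (hO : IsSignature {C | M.IsCircuitSet C} O)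
    (hOstar : IsSignature {D | M✶.IsCircuitSet D} Ostar) (hbin : IsBinaryOrientation O Ostar)
    (he₀ : e₀ ∈ M.E) {f : α → A} (hf_nonneg : ∀ e, 0 ≤ f e) (hfe₀ : 0 < f e₀)
    (hf : ∀ C ∈ O, ∑ᶠ e, C e • f e = 0) :
    ∃ G ⊆ {e ∈ M.E | f e ≠ 0}, e₀ ∈ G ∧ ∀ C ∈ O, ∑ᶠ e ∈ G, C e = 0 := by
  classical
  have hfin : ∀ C ∈ O, (support C).Finite := fun C hC ↦
    Matroid.IsCircuit.finite (hO.dom_mem C hC)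
  simp only [← singleton_subset_iff (a := e₀)]
  refine exists_finsum_mem_eq_zero_of_forall_finset hfin fun F ↦ ?_
  obtain ⟨G, hG, he₀G, hGsum⟩ := IsTensionOn.exists_finsum_mem_eq_zero hO hOstar hbin he₀
    (Finset.mem_insert_self e₀ F) (fun C hC _ ↦ hf C hC) (fun e _ ↦ hf_nonneg e) hfe₀
  have hGS : G ⊆ {e ∈ M.E | f e ≠ 0} := fun e he ↦
    ⟨(hG he).1, (Finset.mem_filter.1 (hG he).2).2⟩
  exact ⟨G, hGS, singleton_subset_iff.2 he₀G, fun C hC hCF ↦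
    hGsum C hC (hCF.trans (Finset.coe_subset.2 (Finset.subset_insert e₀ F)))⟩

/-- If `f : E → ℕ` satisfies `f e₀ ≥ 1` and `∑_{e ∈ dom C} f(e)·C(e) = 0` for every
signed circuit `C ∈ O` of a finitary binary oriented matroid, then there is a set `G`
of elements with nonzero `f`-value, containing `e₀`, with `∑_{e ∈ G ∩ dom C} C(e) = 0`
for every `C ∈ O`. -/
theorem exists_zero_sum_subset_of_support (M : Matroid α) [M.Finitary]
    (O Ostar : Set (α → ℤ))
    (hor : IsOrientation M O Ostar) (hbin : IsBinaryOrientation O Ostar)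
    (e₀ : α) (he₀ : e₀ ∈ M.E) (f : α → ℕ) (hfe₀ : 1 ≤ f e₀)
    (hf : ∀ C ∈ O, ∑ᶠ e, (f e : ℤ) * C e = 0) :
    ∃ G ⊆ {e ∈ M.E | f e ≠ 0}, e₀ ∈ G ∧ ∀ C ∈ O, ∑ᶠ e ∈ G, C e = 0 := by
  simpa using exists_zero_sum_subset_of_support_general hor.circuit_signature
    hor.cocircuit_signature hbin he₀ (f := fun e ↦ (f e : ℤ)) (fun e ↦ by positivity)
    (by exact_mod_cast hfe₀) (by simpa only [smul_eq_mul, mul_comm] using hf)
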